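/- Let I_1,…,I_t ⊂ S = K[x_1,…,x_n] be nonzero proper monomial ideals with pairwise disjoint supports. Suppose that for each j = 1,…,t one has v(I_j^k) = α(I_j)·k − 1 for all k ≥ 1 (i.e., the v-function of each I_j is linear from the start, with v-stability index 1). Then for every k ≥ 1, v((I_1 + ⋯ + I_t)^k) = (min_{1≤j≤t} α(I_j))·k + ( ∑_{j=1}^t α(I_j) − min_{1≤j≤t} α(I_j) − t ). -/

import Mathlib

open MvPolynomial

noncomputable section

/-- The set of associated primes `Ass(L)` of the quotient by an ideal `L`. -/
def assOf {A : Type} [CommRing A] (L : Ideal A) : Set (Ideal A) :=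
  associatedPrimes A (A ⧸ L)

/-- `𝔄` is the stable value `Ass^∞(L)` of `Ass(L^k)` for all large `k`. -/
def IsStableAssValue {A : Type} [CommRing A] (L : Ideal A) (𝔄 : Set (Ideal A)) : Prop :=
  ∃ N : ℕ, ∀ k : ℕ, N ≤ k → assOf (L ^ k) = 𝔄

/-- `Ass^*(L) = ⋃_{k ≥ 1} Ass(L^k)`. -/
def assStar {A : Type} [CommRing A] (L : Ideal A) : Set (Ideal A) :=
  {p | ∃ k : ℕ, 1 ≤ k ∧ p ∈ assOf (L ^ k)}

/-- The local v-number `v_p(L)`: the least degree of a homogeneous `f` with `(L : f) = p`. -/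
def vnum {σ K : Type} [Field K] (L p : Ideal (MvPolynomial σ K)) : ℕ :=
  sInf {d : ℕ | ∃ f : MvPolynomial σ K, f.IsHomogeneous d ∧ L.colon (Ideal.span {f}) = p}

/-- The v-number `v(L) = min_{p ∈ Ass(L)} v_p(L)`. -/
def vnumber {σ K : Type} [Field K] (L : Ideal (MvPolynomial σ K)) : ℕ :=
  sInf {d : ℕ | ∃ p ∈ assOf L, ∃ f : MvPolynomial σ K,
    f.IsHomogeneous d ∧ L.colon (Ideal.span {f}) = p}

/-- The initial degree `α(L)`: the least `d` such that `L` contains a nonzero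
homogeneous element of degree `d`. -/
def alphaDeg {σ K : Type} [Field K] (L : Ideal (MvPolynomial σ K)) : ℕ :=
  sInf {d : ℕ | ∃ f ∈ L, f ≠ 0 ∧ MvPolynomial.IsHomogeneous f d}

/-- A graded (homogeneous) ideal: one containing all homogeneous components
of each of its elements. -/
def IsGradedIdeal {σ K : Type} [Field K] (I : Ideal (MvPolynomial σ K)) : Prop :=
  ∀ f ∈ I, ∀ d : ℕ, homogeneousComponent d f ∈ I

/-- A monomial ideal: an ideal generated by monomials. -/
def IsMonomialIdeal {σ K : Type} [Field K] (I : Ideal (MvPolynomial σ K)) : Prop :=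
  ∃ G : Set (σ →₀ ℕ), I = Ideal.span ((fun a => (monomial a (1 : K))) '' G)

/-- Exponent vectors of the minimal monomial generators of a monomial ideal. -/
def minimalMonGens {σ K : Type} [Field K] (I : Ideal (MvPolynomial σ K)) : Set (σ →₀ ℕ) :=
  {a | (monomial a (1 : K)) ∈ I ∧
    ∀ b : σ →₀ ℕ, (monomial b (1 : K)) ∈ I → b ≤ a → b = a}

/-- The support of a monomial ideal: the union of the supports of its
minimal monomial generators. -/
def suppIdeal {σ K : Type} [Field K] (I : Ideal (MvPolynomial σ K)) : Set σ :=
  ⋃ a ∈ minimalMonGens I, (a.support : Set σ)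

/-!
For a monomial ideal `L`, the v-number is the least degree of a monomial `x ^ u` such that
`L : x ^ u` is prime. For `L = I ^ (k + 1)` this primality says that the order of `x ^ u` along
`I`, the largest `r` with `x ^ u ∈ I ^ r`, equals `k`, and that it cannot grow under multiplication
by a product unless it already grows under multiplication by one of the factors. When the supports
of the `I j` are disjoint, the order along `∑ j, I j` is the sum of the orders along the `I j`, and
each of these only sees the variables of `I j`. Hence
`v ((∑ j, I j) ^ (k + 1)) = min {∑ j, v (I j ^ (c j + 1)) | ∑ j, c j = k}`. Since
`v (I ^ k) ≥ α(I) k - 1` always holds, the minimum is attained by putting all of `k` on an ideal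
with the least initial degree.
-/

section Ideals

variable {A ι : Type*} [CommSemiring A]

theorem pow_succ_ne_top {I : Ideal A} (hI : I ≠ ⊤) (k : ℕ) : I ^ (k + 1) ≠ ⊤ :=
  ((Ideal.pow_le_self k.succ_ne_zero).trans_lt hI.lt_top).ne

theorem ideal_le_sum [Fintype ι] (I : ι → Ideal A) (j : ι) : I j ≤ ∑ l, I l := by
  rw [Ideal.sum_eq_sup]
  exact Finset.le_sup (Finset.mem_univ j)

end Ideals

section MonomialExponents

variable {σ R : Type*} [CommSemiring R] {I J L : Ideal (MvPolynomial σ R)} {u v : σ →₀ ℕ}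

/-- The set of exponent vectors of the monomials lying in an ideal. It determines a monomial ideal,
and turns ideal membership into combinatorics of exponent vectors. -/
def monExponents (L : Ideal (MvPolynomial σ R)) : Set (σ →₀ ℕ) :=
  {u | monomial u (1 : R) ∈ L}

theorem mem_monExponents : u ∈ monExponents L ↔ monomial u (1 : R) ∈ L := Iff.rfl

theorem monExponents_mono (h : I ≤ J) : monExponents I ⊆ monExponents J := fun _ hu => h hu

theorem zero_mem_monExponents : 0 ∈ monExponents L ↔ L = ⊤ := (Ideal.eq_top_iff_one L).symm

theorem add_mem_monExponents_mul (hu : u ∈ monExponents I) (hv : v ∈ monExponents J) :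
    u + v ∈ monExponents (I * J) := by
  rw [mem_monExponents, ← one_mul (1 : R), ← monomial_mul]
  exact Ideal.mul_mem_mul hu hv

theorem isUpperSet_monExponents (L : Ideal (MvPolynomial σ R)) : IsUpperSet (monExponents L) := by
  intro u v huv hu
  obtain ⟨w, rfl⟩ := exists_add_of_le huv
  have h := L.mul_mem_right (monomial w (1 : R)) hu
  rwa [monomial_mul, one_mul] at h

theorem mem_monExponents_span_image [Nontrivial R] {G : Set (σ →₀ ℕ)} :
    u ∈ monExponents (Ideal.span ((fun a => monomial a (1 : R)) '' G)) ↔ ∃ g ∈ G, g ≤ u := by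
  classical
  rw [mem_monExponents, mem_ideal_span_monomial_image]
  simp [support_monomial]

theorem mem_of_support_subset_monExponents {f : MvPolynomial σ R}
    (h : ∀ u ∈ f.support, u ∈ monExponents L) : f ∈ L := by
  rw [f.as_sum]
  refine L.sum_mem fun u hu => ?_
  rw [← mul_one (coeff u f), ← C_mul_monomial]
  exact L.mul_mem_left _ (h u hu)

theorem one_le_degree_of_mem_monExponents (hI : I ≠ ⊤) (hu : u ∈ monExponents I) :
    1 ≤ u.degree := by
  rw [Nat.one_le_iff_ne_zero, Ne, Finsupp.degree_eq_zero_iff]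
  rintro rfl
  exact hI (zero_mem_monExponents.1 hu)

theorem degree_eq_of_mem_support {f : MvPolynomial σ R} {d : ℕ} (hf : f.IsHomogeneous d)
    (hu : u ∈ f.support) : u.degree = d :=
  not_imp_comm.1 hf.coeff_eq_zero (mem_support_iff.1 hu)

end MonomialExponents

section MonomialIdeals

variable {σ K : Type} [Field K] {I J L : Ideal (MvPolynomial σ K)} {u : σ →₀ ℕ} {k d : ℕ}

namespace IsMonomialIdeal

theorem mem_iff (hL : IsMonomialIdeal L) {f : MvPolynomial σ K} :
    f ∈ L ↔ ∀ u ∈ f.support, u ∈ monExponents L := by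
  refine ⟨fun hf u hu => ?_, mem_of_support_subset_monExponents⟩
  obtain ⟨G, rfl⟩ := hL
  exact mem_monExponents_span_image.2 (mem_ideal_span_monomial_image.1 hf u hu)

theorem eq_span_monExponents (hL : IsMonomialIdeal L) :
    L = Ideal.span ((fun a => monomial a (1 : K)) '' monExponents L) := by
  apply le_antisymm
  · exact fun f hf => mem_ideal_span_monomial_image.2 fun u hu => ⟨u, hL.mem_iff.1 hf u hu, le_rfl⟩
  · exact Ideal.span_le.2 (Set.image_subset_iff.2 fun _ ha => ha)

theorem monExponents_nonempty (hL : IsMonomialIdeal L) (hnz : L ≠ ⊥) :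
    (monExponents L).Nonempty := by
  obtain ⟨f, hf, hf0⟩ := Submodule.exists_mem_ne_zero_of_ne_bot hnz
  obtain ⟨u, hu⟩ := support_nonempty.2 hf0
  exact ⟨u, hL.mem_iff.1 hf u hu⟩

open scoped Pointwise in
theorem mul_eq_span (hI : IsMonomialIdeal I) (hJ : IsMonomialIdeal J) :
    I * J = Ideal.span ((fun a => monomial a (1 : K)) '' (monExponents I + monExponents J)) := by
  conv_lhs => rw [hI.eq_span_monExponents, hJ.eq_span_monExponents]
  rw [Ideal.span_mul_span', ← Set.image2_add, ← Set.image2_mul, Set.image2_image_left,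
    Set.image2_image_right, Set.image_image2]
  simp only [monomial_mul, one_mul]

theorem pow (hI : IsMonomialIdeal I) (k : ℕ) : IsMonomialIdeal (I ^ k) := by
  induction k with
  | zero => exact ⟨{0}, by simp⟩
  | succ k ih => exact pow_succ I k ▸ ⟨_, ih.mul_eq_span hI⟩

theorem exists_add_eq_of_mem_pow_succ (hI : IsMonomialIdeal I)
    (hu : u ∈ monExponents (I ^ (k + 1))) :
    ∃ a ∈ monExponents (I ^ k), ∃ b ∈ monExponents I, a + b = u := by
  rw [pow_succ, (hI.pow k).mul_eq_span hI, mem_monExponents_span_image] at hu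
  obtain ⟨_, ⟨a, ha, b, hb, rfl⟩, hle⟩ := hu
  obtain ⟨c, rfl⟩ := exists_add_of_le hle
  exact ⟨a, ha, b + c, isUpperSet_monExponents I le_self_add hb, (add_assoc a b c).symm⟩

theorem mul_le_degree_of_mem_pow (hI : IsMonomialIdeal I)
    (hd : ∀ a ∈ monExponents I, d ≤ a.degree) (hu : u ∈ monExponents (I ^ k)) :
    d * k ≤ u.degree := by
  induction k generalizing u with
  | zero => exact Nat.zero_le _
  | succ k ih =>
    obtain ⟨a, ha, b, hb, rfl⟩ := hI.exists_add_eq_of_mem_pow_succ hu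
    rw [mul_add_one, map_add]
    exact add_le_add (ih ha) (hd b hb)

theorem mem_pow_of_add_single_mem_pow_succ (hI : IsMonomialIdeal I) {i : σ}
    (hu : u + Finsupp.single i 1 ∈ monExponents (I ^ (k + 1))) : u ∈ monExponents (I ^ k) := by
  induction k generalizing u with
  | zero => simp [mem_monExponents]
  | succ k ih =>
    obtain ⟨a, ha, b, hb, hab⟩ := hI.exists_add_eq_of_mem_pow_succ hu
    by_cases hbi : Finsupp.single i 1 ≤ b
    · obtain ⟨b', rfl⟩ := exists_add_of_le hbi
      obtain rfl : a + b' = u := by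
        apply add_right_cancel (b := Finsupp.single i 1)
        rw [← hab]
        abel
      exact isUpperSet_monExponents _ le_self_add ha
    · have hai : Finsupp.single i 1 ≤ a := by
        have := DFunLike.congr_fun hab i
        simp only [Finsupp.single_le_iff, Finsupp.add_apply, Finsupp.single_eq_same] at this hbi ⊢
        omega
      obtain ⟨a', rfl⟩ := exists_add_of_le hai
      obtain rfl : a' + b = u := by
        apply add_right_cancel (b := Finsupp.single i 1)
        rw [← hab]
        abel
      exact pow_succ I k ▸ add_mem_monExponents_mul (ih (by rwa [add_comm a'])) hb

end IsMonomialIdeal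

theorem alphaDeg_le_degree (hu : u ∈ monExponents I) : alphaDeg I ≤ u.degree :=
  Nat.sInf_le ⟨_, hu, by simp, isHomogeneous_monomial _ rfl⟩

theorem IsMonomialIdeal.alphaDeg_pos (hI : IsMonomialIdeal I) (hnz : I ≠ ⊥) (hpr : I ≠ ⊤) :
    0 < alphaDeg I := by
  obtain ⟨a, ha⟩ := hI.monExponents_nonempty hnz
  obtain ⟨f, hf, hf0, hhom⟩ : alphaDeg I ∈ {d | ∃ f ∈ I, f ≠ 0 ∧ f.IsHomogeneous d} :=
    Nat.sInf_mem ⟨_, _, ha, by simp, isHomogeneous_monomial _ rfl⟩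
  obtain ⟨u, hu⟩ := support_nonempty.2 hf0
  rw [← degree_eq_of_mem_support hhom hu]
  exact one_le_degree_of_mem_monExponents hpr (hI.mem_iff.1 hf u hu)

end MonomialIdeals

section PrimeSpan

variable {σ R : Type*} [CommRing R]

open Classical in
theorem sub_aeval_mem_span_X_image (s : Set σ) (f : MvPolynomial σ R) :
    f - aeval (fun i => if i ∈ s then 0 else X i) f ∈ Ideal.span (X '' s) := by
  rw [← Ideal.Quotient.eq_zero_iff_mem, map_sub, sub_eq_zero]
  suffices h : Ideal.Quotient.mkₐ R (Ideal.span (X '' s)) =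
      (Ideal.Quotient.mkₐ R _).comp (aeval fun i => if i ∈ s then 0 else X i) from
    DFunLike.congr_fun h f
  ext i
  by_cases hi : i ∈ s
  · simpa [hi] using! Ideal.Quotient.eq_zero_iff_mem.2
      (Ideal.subset_span (Set.mem_image_of_mem (X (R := R)) hi))
  · simp [hi]

theorem isPrime_span_X_image [IsDomain R] (s : Set σ) :
    (Ideal.span (X '' s) : Ideal (MvPolynomial σ R)).IsPrime := by
  classical
  let φ : MvPolynomial σ R →ₐ[R] MvPolynomial σ R := aeval fun i => if i ∈ s then 0 else X i
  have hker : Ideal.span (X '' s) = RingHom.ker φ := by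
    apply le_antisymm
    · rw [Ideal.span_le]
      rintro _ ⟨i, hi, rfl⟩
      simp [φ, hi]
    · intro f hf
      have h : f - φ f ∈ _ := sub_aeval_mem_span_X_image s f
      rwa [show φ f = 0 from RingHom.mem_ker.1 hf, sub_zero] at h
  exact hker ▸ RingHom.ker_isPrime φ

end PrimeSpan

section PrimeWitnesses

variable {σ K : Type} [Field K] {L : Ideal (MvPolynomial σ K)} {f : MvPolynomial σ K}
  {u w : σ →₀ ℕ}

/-- `IsPrimeWitness L u` says, in terms of exponent vectors, that for a monomial ideal `L` the
colon ideal `L : x ^ u` is prime. The v-number of `L` is the least degree of such a `u`. -/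
def IsPrimeWitness (L : Ideal (MvPolynomial σ K)) (u : σ →₀ ℕ) : Prop :=
  u ∉ monExponents L ∧ ∀ w w', u + w + w' ∈ monExponents L →
    u + w ∈ monExponents L ∨ u + w' ∈ monExponents L

theorem IsPrimeWitness.exists_add_single_mem (hu : IsPrimeWitness L u)
    (hw : u + w ∈ monExponents L) :
    ∃ i, w i ≠ 0 ∧ u + Finsupp.single i 1 ∈ monExponents L := by
  induction w using Finsupp.induction_linear with
  | zero => exact absurd (by simpa using hw) hu.1
  | add w w' ih ih' =>
    rcases hu.2 w w' (by rwa [add_assoc]) with h | h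
    · obtain ⟨i, hi, hmem⟩ := ih h
      exact ⟨i, by simp [hi], hmem⟩
    · obtain ⟨i, hi, hmem⟩ := ih' h
      exact ⟨i, by simp [hi], hmem⟩
  | single i m =>
    suffices m ≠ 0 ∧ u + Finsupp.single i 1 ∈ monExponents L from ⟨i, by simpa using this⟩
    induction m with
    | zero => exact absurd (by simpa using hw) hu.1
    | succ m ih =>
      rw [Finsupp.single_add, ← add_assoc] at hw
      exact ⟨m.succ_ne_zero, (hu.2 _ _ hw).elim (fun h => (ih h).2) id⟩

namespace IsMonomialIdeal

theorem mem_colon_monomial_iff (hL : IsMonomialIdeal L) :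
    f ∈ L.colon {monomial u 1} ↔ ∀ w ∈ f.support, u + w ∈ monExponents L := by
  classical
  rw [Submodule.mem_colon_singleton, smul_eq_mul, hL.mem_iff]
  constructor
  · intro h w hw
    exact h _ (by simpa [add_comm u, coeff_mul_monomial] using hw)
  · intro h v hv
    obtain ⟨w, hw, _, hu, rfl⟩ := Finset.mem_add.1 (support_mul _ _ hv)
    obtain rfl : _ = u := by simpa using support_monomial_subset hu
    exact add_comm w _ ▸ h w hw

theorem colon_monomial_eq_span (hL : IsMonomialIdeal L) (hu : IsPrimeWitness L u) :
    L.colon {monomial u 1} =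
      Ideal.span (X '' {i | u + Finsupp.single i 1 ∈ monExponents L}) := by
  ext f
  rw [hL.mem_colon_monomial_iff, mem_ideal_span_X_image]
  refine forall₂_congr fun w _ => ⟨fun h => ?_, fun ⟨i, hi, hwi⟩ => ?_⟩
  · obtain ⟨i, hwi, hi⟩ := hu.exists_add_single_mem h
    exact ⟨i, hi, hwi⟩
  · refine isUpperSet_monExponents L ?_ hi
    gcongr
    rwa [Finsupp.single_le_iff, Nat.one_le_iff_ne_zero]

theorem exists_isPrimeWitness_of_isPrime_colon (hL : IsMonomialIdeal L)
    (hp : (L.colon {f}).IsPrime) : ∃ u ∈ f.support, IsPrimeWitness L u := by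
  classical
  -- A prime ideal containing a finite intersection contains one of the ideals `L : x ^ u`.
  have hinf : f.support.inf (fun u => L.colon {monomial u (1 : K)}) ≤ L.colon {f} := by
    intro g hg
    rw [Submodule.mem_finsetInf] at hg
    rw [Submodule.mem_colon_singleton, smul_eq_mul, f.as_sum, Finset.mul_sum]
    refine L.sum_mem fun u hu => ?_
    rw [← mul_one (coeff u f), ← C_mul_monomial, mul_left_comm]
    exact L.mul_mem_left _ (Submodule.mem_colon_singleton.1 (hg u hu))
  obtain ⟨u, hu, hle⟩ := hp.inf_le'.1 hinf
  have hiff : ∀ w, u + w ∈ monExponents L ↔ monomial w 1 ∈ L.colon {f} := by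
    refine fun w => ⟨fun hw => hle (hL.mem_colon_monomial_iff.2 ?_), fun hw => ?_⟩
    · simpa [support_monomial] using hw
    · rw [Submodule.mem_colon_singleton, smul_eq_mul, mul_comm] at hw
      exact hL.mem_iff.1 hw _ (by simpa [coeff_mul_monomial] using hu)
  refine ⟨u, hu, fun hmem => hp.ne_top ?_, fun w w' h => ?_⟩
  · exact (Ideal.eq_top_iff_one _).2 ((hiff 0).1 (by simpa using hmem))
  · rw [add_assoc, hiff, ← one_mul (1 : K), ← monomial_mul] at h
    simpa only [hiff] using hp.mem_or_mem h

end IsMonomialIdeal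

theorem bot_colon_mk_singleton {A : Type*} [CommRing A] (L : Ideal A) (f : A) :
    (⊥ : Submodule A (A ⧸ L)).colon {Ideal.Quotient.mk L f} = L.colon {f} := by
  ext g
  rw [Submodule.mem_colon_singleton, Submodule.mem_colon_singleton, Submodule.mem_bot,
    smul_eq_mul, ← Ideal.Quotient.eq_zero_iff_mem, map_mul]
  rfl

theorem colon_mem_assOf {A : Type} [CommRing A] {L : Ideal A} {f : A}
    (h : (L.colon {f}).IsPrime) : L.colon {f} ∈ assOf L :=
  ⟨h, Ideal.Quotient.mk L f, by rw [bot_colon_mk_singleton, h.radical]⟩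

theorem exists_isPrime_colon {A : Type*} [CommRing A] [IsNoetherianRing A] {L : Ideal A}
    (hL : L ≠ ⊤) : ∃ f, (L.colon {f}).IsPrime := by
  have := Ideal.Quotient.nontrivial_iff.2 hL
  obtain ⟨p, hp⟩ := associatedPrimes.nonempty A (A ⧸ L)
  obtain ⟨hprime, x, rfl⟩ := isAssociatedPrime_iff.1 hp
  obtain ⟨f, rfl⟩ := Ideal.Quotient.mk_surjective x
  exact ⟨f, bot_colon_mk_singleton L f ▸ hprime⟩

theorem IsMonomialIdeal.vnumber_eq_sInf (hL : IsMonomialIdeal L) :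
    vnumber L = sInf (Finsupp.degree '' {u | IsPrimeWitness L u}) := by
  unfold vnumber
  congr 1
  ext d
  simp only [Ideal.colon_span]
  constructor
  · rintro ⟨_, hp, f, hf, rfl⟩
    obtain ⟨u, hu, hwit⟩ := hL.exists_isPrimeWitness_of_isPrime_colon hp.isPrime
    exact ⟨u, hwit, degree_eq_of_mem_support hf hu⟩
  · rintro ⟨u, hu, rfl⟩
    have hp : (L.colon {monomial u 1}).IsPrime :=
      hL.colon_monomial_eq_span hu ▸ isPrime_span_X_image _
    exact ⟨_, colon_mem_assOf hp, _, isHomogeneous_monomial _ rfl, rfl⟩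

theorem IsMonomialIdeal.isLeast_vnumber [Finite σ] (hL : IsMonomialIdeal L) (hne : L ≠ ⊤) :
    IsLeast (Finsupp.degree '' {u | IsPrimeWitness L u}) (vnumber L) := by
  obtain ⟨f, hf⟩ := exists_isPrime_colon hne
  obtain ⟨u, -, hu⟩ := hL.exists_isPrimeWitness_of_isPrime_colon hf
  rw [hL.vnumber_eq_sInf]
  exact ⟨Nat.sInf_mem ⟨_, u, hu, rfl⟩, fun _ => Nat.sInf_le⟩

end PrimeWitnesses

section MonomialOrder

variable {σ K : Type} [Field K] {I : Ideal (MvPolynomial σ K)} {u : σ →₀ ℕ} {k r : ℕ}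

/-- The order of the monomial `x ^ u` along `I`: the largest `r` such that `x ^ u ∈ I ^ r`. -/
def monOrder (I : Ideal (MvPolynomial σ K)) (u : σ →₀ ℕ) : ℕ :=
  sSup {r | u ∈ monExponents (I ^ r)}

/-- `IsPrimeJump f u` abstracts `IsPrimeWitness` from ideals to functions `f` on exponent vectors:
if `f` grows when `w + w'` is added to `u`, then it already grows when `w` or `w'` is. -/
def IsPrimeJump {σ : Type*} (f : (σ →₀ ℕ) → ℕ) (u : σ →₀ ℕ) : Prop :=
  ∀ w w', f u < f (u + w + w') → f u < f (u + w) ∨ f u < f (u + w')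

namespace IsMonomialIdeal

theorem le_monOrder_iff (hI : IsMonomialIdeal I) (hpr : I ≠ ⊤) :
    r ≤ monOrder I u ↔ u ∈ monExponents (I ^ r) := by
  have hbdd : BddAbove {r | u ∈ monExponents (I ^ r)} :=
    ⟨u.degree, fun r hr => one_mul r ▸
      hI.mul_le_degree_of_mem_pow (fun _ => one_le_degree_of_mem_monExponents hpr) hr⟩
  refine ⟨fun h => monExponents_mono (Ideal.pow_le_pow_right h) ?_, fun h => le_csSup hbdd h⟩
  exact Nat.sSup_mem (s := {r | u ∈ monExponents (I ^ r)}) ⟨0, by simp [mem_monExponents]⟩ hbdd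

theorem monotone_monOrder (hI : IsMonomialIdeal I) (hpr : I ≠ ⊤) : Monotone (monOrder I) :=
  fun _ _ h => (hI.le_monOrder_iff hpr).2
    (isUpperSet_monExponents _ h ((hI.le_monOrder_iff hpr).1 le_rfl))

theorem exists_add_single_mem_of_isPrimeWitness_pow (hI : IsMonomialIdeal I) (hnz : I ≠ ⊥)
    (hu : IsPrimeWitness (I ^ k) u) : ∃ i, u + Finsupp.single i 1 ∈ monExponents (I ^ k) := by
  obtain ⟨a, ha⟩ := (hI.pow k).monExponents_nonempty (pow_ne_zero k hnz)
  obtain ⟨i, -, hi⟩ := hu.exists_add_single_mem (isUpperSet_monExponents _ le_add_self ha)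
  exact ⟨i, hi⟩

theorem isPrimeWitness_pow_succ_iff (hI : IsMonomialIdeal I) (hnz : I ≠ ⊥) (hpr : I ≠ ⊤) :
    IsPrimeWitness (I ^ (k + 1)) u ↔ monOrder I u = k ∧ IsPrimeJump (monOrder I) u := by
  have hmem : ∀ v, v ∈ monExponents (I ^ (k + 1)) ↔ k < monOrder I v :=
    fun v => (hI.le_monOrder_iff hpr).symm
  constructor
  · intro hu
    obtain ⟨i, hi⟩ := hI.exists_add_single_mem_of_isPrimeWitness_pow hnz hu
    obtain rfl : monOrder I u = k := le_antisymm (not_lt.1 fun h => hu.1 ((hmem u).2 h))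
      ((hI.le_monOrder_iff hpr).2 (hI.mem_pow_of_add_single_mem_pow_succ hi))
    exact ⟨rfl, by simpa only [hmem] using! hu.2⟩
  · rintro ⟨rfl, hjump⟩
    exact ⟨by simp only [hmem, lt_irrefl, not_false_eq_true], by simpa only [hmem] using! hjump⟩

theorem alphaDeg_mul_le_vnumber_pow_add_one [Finite σ] (hI : IsMonomialIdeal I) (hnz : I ≠ ⊥)
    (hpow : I ^ k ≠ ⊤) : alphaDeg I * k ≤ vnumber (I ^ k) + 1 := by
  obtain ⟨u, hu, hdeg⟩ := ((hI.pow k).isLeast_vnumber hpow).1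
  obtain ⟨i, hi⟩ := hI.exists_add_single_mem_of_isPrimeWitness_pow hnz hu
  have h := hI.mul_le_degree_of_mem_pow (fun _ => alphaDeg_le_degree) hi
  rwa [map_add, Finsupp.degree_single, hdeg] at h

end IsMonomialIdeal

end MonomialOrder

section Restriction

variable {σ ι M : Type*} [AddCommMonoid M] {V W : Set σ}

open Classical in
/-- The restriction of a finitely supported function to a set of coordinates, extended by zero. On
exponent vectors it substitutes `1` for the variables outside `V`. -/
def restrictTo (V : Set σ) : (σ →₀ M) →+ (σ →₀ M) :=
  Finsupp.filterAddHom (· ∈ V)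

open Classical in
theorem restrictTo_apply_of_mem (u : σ →₀ M) {i : σ} (hi : i ∈ V) : restrictTo V u i = u i :=
  Finsupp.filter_apply_pos _ _ hi

open Classical in
theorem restrictTo_apply_of_notMem (u : σ →₀ M) {i : σ} (hi : i ∉ V) : restrictTo V u i = 0 :=
  Finsupp.filter_apply_neg _ _ hi

theorem restrictTo_restrictTo (V : Set σ) (u : σ →₀ M) :
    restrictTo V (restrictTo V u) = restrictTo V u := by
  ext i
  by_cases hi : i ∈ V
  · rw [restrictTo_apply_of_mem _ hi]
  · rw [restrictTo_apply_of_notMem _ hi, restrictTo_apply_of_notMem _ hi]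

theorem restrictTo_restrictTo_of_disjoint (h : Disjoint V W) (u : σ →₀ M) :
    restrictTo V (restrictTo W u) = 0 := by
  ext i
  by_cases hi : i ∈ V
  · rw [restrictTo_apply_of_mem _ hi, restrictTo_apply_of_notMem _ (h.notMem_of_mem_left hi)]
    rfl
  · exact restrictTo_apply_of_notMem _ hi

theorem restrictTo_sum_restrictTo [Fintype ι] {V : ι → Set σ}
    (hV : Pairwise fun i j => Disjoint (V i) (V j))
    (u : ι → σ →₀ M) (j : ι) :
    restrictTo (V j) (∑ l, restrictTo (V l) (u l)) = restrictTo (V j) (u j) := by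
  rw [map_sum, Finset.sum_eq_single_of_mem j (Finset.mem_univ j), restrictTo_restrictTo]
  exact fun l _ hl => restrictTo_restrictTo_of_disjoint (hV hl.symm) _

variable [PartialOrder M] {u a : σ →₀ M}

theorem le_restrictTo (h : a ≤ u) (ha : ↑a.support ⊆ V) : a ≤ restrictTo V u := by
  intro i
  by_cases hi : i ∈ V
  · exact (h i).trans_eq (restrictTo_apply_of_mem u hi).symm
  · rw [Finsupp.notMem_support_iff.1 fun h => hi (ha h), restrictTo_apply_of_notMem _ hi]

variable [CanonicallyOrderedAdd M]

theorem restrictTo_le (V : Set σ) (u : σ →₀ M) : restrictTo V u ≤ u := by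
  intro i
  by_cases hi : i ∈ V
  · exact (restrictTo_apply_of_mem u hi).le
  · exact (restrictTo_apply_of_notMem u hi).trans_le (zero_le)

theorem sum_restrictTo_le [Fintype ι] {V : ι → Set σ}
    (hV : Pairwise fun i j => Disjoint (V i) (V j))
    (u : σ →₀ M) : ∑ j, restrictTo (V j) u ≤ u := by
  intro i
  rw [Finsupp.finsetSum_apply]
  by_cases h : ∃ j, i ∈ V j
  · obtain ⟨j, hj⟩ := h
    rw [Finset.sum_eq_single_of_mem j (Finset.mem_univ j)]
    · exact restrictTo_le _ u i
    · exact fun l _ hl => restrictTo_apply_of_notMem u ((hV hl).notMem_of_mem_right hj)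
  · push Not at h
    rw [Finset.sum_eq_zero fun j _ => restrictTo_apply_of_notMem u (h j)]
    exact zero_le

end Restriction

section SumsOfFunctions

variable {σ ι : Type*} [Fintype ι] {V : ι → Set σ} {f : ι → (σ →₀ ℕ) → ℕ} {u x : σ →₀ ℕ}

theorem sum_lt_sum_add_restrictTo_iff (hV : Pairwise fun i j => Disjoint (V i) (V j))
    (hf : ∀ j u, f j (restrictTo (V j) u) = f j u) (j : ι) :
    ∑ l, f l u < ∑ l, f l (u + restrictTo (V j) x) ↔ f j u < f j (u + x) := by
  have hself : f j (u + restrictTo (V j) x) = f j (u + x) := by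
    rw [← hf, map_add, restrictTo_restrictTo, ← map_add, hf]
  have hother : ∀ l, l ≠ j → f l (u + restrictTo (V j) x) = f l u := by
    intro l hl
    rw [← hf, map_add, restrictTo_restrictTo_of_disjoint (hV hl), add_zero, hf]
  constructor
  · intro h
    obtain ⟨l, -, hl⟩ := Finset.exists_lt_of_sum_lt h
    obtain rfl : l = j := not_imp_comm.1 (fun hne => (hother l hne).symm) hl.ne
    rwa [← hself]
  · refine fun h => Finset.sum_lt_sum (fun l _ => ?_) ⟨j, Finset.mem_univ j, h.trans_eq hself.symm⟩
    obtain rfl | hl := eq_or_ne l j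
    · exact (h.trans_eq hself.symm).le
    · exact (hother l hl).ge

theorem isPrimeJump_sum_iff (hV : Pairwise fun i j => Disjoint (V i) (V j))
    (hf : ∀ j u, f j (restrictTo (V j) u) = f j u) (hmono : ∀ j, Monotone (f j)) :
    IsPrimeJump (fun v => ∑ j, f j v) u ↔ ∀ j, IsPrimeJump (f j) u := by
  constructor
  · intro h j w w' hlt
    rw [add_assoc, ← sum_lt_sum_add_restrictTo_iff hV hf, map_add, ← add_assoc] at hlt
    simpa only [sum_lt_sum_add_restrictTo_iff hV hf] using h _ _ hlt
  · intro h w w' hlt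
    have hgrow : ∀ {j v}, f j u < f j (u + v) → ∑ j, f j u < ∑ j, f j (u + v) := fun {j v} hj =>
      Finset.sum_lt_sum (fun l _ => hmono l le_self_add) ⟨j, Finset.mem_univ j, hj⟩
    obtain ⟨j, -, hj⟩ := Finset.exists_lt_of_sum_lt hlt
    exact (h j w w' hj).imp hgrow hgrow

end SumsOfFunctions

section Supports

variable {σ K : Type} [Field K] {I : Ideal (MvPolynomial σ K)} {u v : σ →₀ ℕ} {k : ℕ}

theorem exists_minimalMonGens_le (hu : u ∈ monExponents I) : ∃ a ∈ minimalMonGens I, a ≤ u := by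
  obtain ⟨a, hle, ha⟩ := exists_minimal_le_of_wellFoundedLT (· ∈ monExponents I) u hu
  exact ⟨a, ⟨ha.prop, fun b hb hba => ha.eq_of_le hb hba⟩, hle⟩

theorem restrictTo_suppIdeal_mem (hu : u ∈ monExponents I) :
    restrictTo (suppIdeal I) u ∈ monExponents I := by
  obtain ⟨a, ha, hle⟩ := exists_minimalMonGens_le hu
  exact isUpperSet_monExponents I
    (le_restrictTo hle (Set.subset_biUnion_of_mem (u := fun a => (a.support : Set σ)) ha)) ha.1

namespace IsMonomialIdeal

theorem restrictTo_suppIdeal_mem_pow_iff (hI : IsMonomialIdeal I) :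
    restrictTo (suppIdeal I) u ∈ monExponents (I ^ k) ↔ u ∈ monExponents (I ^ k) := by
  refine ⟨fun h => isUpperSet_monExponents _ (restrictTo_le _ u) h, fun h => ?_⟩
  induction k generalizing u with
  | zero => simp [mem_monExponents]
  | succ k ih =>
    obtain ⟨a, ha, b, hb, rfl⟩ := hI.exists_add_eq_of_mem_pow_succ h
    rw [map_add, pow_succ]
    exact add_mem_monExponents_mul (ih ha) (restrictTo_suppIdeal_mem hb)

theorem mem_pow_congr (hI : IsMonomialIdeal I)
    (h : restrictTo (suppIdeal I) u = restrictTo (suppIdeal I) v) :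
    u ∈ monExponents (I ^ k) ↔ v ∈ monExponents (I ^ k) := by
  rw [← hI.restrictTo_suppIdeal_mem_pow_iff, h, hI.restrictTo_suppIdeal_mem_pow_iff]

theorem monOrder_restrictTo (hI : IsMonomialIdeal I) (u : σ →₀ ℕ) :
    monOrder I (restrictTo (suppIdeal I) u) = monOrder I u := by
  simp only [monOrder, hI.restrictTo_suppIdeal_mem_pow_iff]

theorem isPrimeWitness_pow_congr (hI : IsMonomialIdeal I)
    (h : restrictTo (suppIdeal I) u = restrictTo (suppIdeal I) v) :
    IsPrimeWitness (I ^ k) u ↔ IsPrimeWitness (I ^ k) v := by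
  have hadd : ∀ w, u + w ∈ monExponents (I ^ k) ↔ v + w ∈ monExponents (I ^ k) :=
    fun w => hI.mem_pow_congr (by rw [map_add, map_add, h])
  simp only [IsPrimeWitness, add_assoc, hadd, hI.mem_pow_congr h]

end IsMonomialIdeal

end Supports

section Sums

variable {σ K ι : Type} [Field K] [Fintype ι] {I : ι → Ideal (MvPolynomial σ K)} {u : σ →₀ ℕ}
  {k : ℕ} (hnz : ∀ j, I j ≠ ⊥) (hpr : ∀ j, I j ≠ ⊤) (hmon : ∀ j, IsMonomialIdeal (I j))
  (hsupp : Pairwise fun i j => Disjoint (suppIdeal (I i)) (suppIdeal (I j)))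

include hmon

theorem sum_eq_span_iUnion_monExponents :
    ∑ j, I j = Ideal.span ((fun a => monomial a (1 : K)) '' ⋃ j, monExponents (I j)) := by
  rw [Set.image_iUnion, Ideal.span_iUnion, Ideal.sum_eq_sup, Finset.sup_univ_eq_iSup]
  exact iSup_congr fun j => (hmon j).eq_span_monExponents

theorem isMonomialIdeal_sum : IsMonomialIdeal (∑ j, I j) :=
  ⟨_, sum_eq_span_iUnion_monExponents hmon⟩

theorem exists_mem_of_mem_monExponents_sum (hu : u ∈ monExponents (∑ j, I j)) :
    ∃ j, u ∈ monExponents (I j) := by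
  rw [sum_eq_span_iUnion_monExponents hmon, mem_monExponents_span_image] at hu
  obtain ⟨g, hg, hle⟩ := hu
  obtain ⟨j, hj⟩ := Set.mem_iUnion.1 hg
  exact ⟨j, isUpperSet_monExponents _ hle hj⟩

include hpr in
theorem sum_ne_top : ∑ j, I j ≠ ⊤ := by
  intro h
  obtain ⟨j, hj⟩ := exists_mem_of_mem_monExponents_sum hmon (zero_mem_monExponents.2 h)
  exact hpr j (zero_mem_monExponents.1 hj)

theorem exists_forall_mem_pow_of_mem_sum_pow (hu : u ∈ monExponents ((∑ j, I j) ^ k)) :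
    ∃ c : ι → ℕ, ∑ j, c j = k ∧ ∀ j, u ∈ monExponents (I j ^ c j) := by
  classical
  induction k generalizing u with
  | zero => exact ⟨0, by simp, fun j => by simp [mem_monExponents]⟩
  | succ k ih =>
    obtain ⟨a, ha, b, hb, rfl⟩ := (isMonomialIdeal_sum hmon).exists_add_eq_of_mem_pow_succ hu
    obtain ⟨c, rfl, hac⟩ := ih ha
    obtain ⟨j, hj⟩ := exists_mem_of_mem_monExponents_sum hmon hb
    refine ⟨c + Pi.single j 1, by simp [Finset.sum_add_distrib], fun l => ?_⟩
    obtain rfl | hl := eq_or_ne l j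
    · rw [Pi.add_apply, Pi.single_eq_same, pow_succ]
      exact add_mem_monExponents_mul (hac l) hj
    · rw [Pi.add_apply, Pi.single_eq_of_ne hl, add_zero]
      exact isUpperSet_monExponents _ le_self_add (hac l)

include hsupp

theorem mem_sum_pow_of_forall_mem_pow {c : ι → ℕ} (hu : ∀ j, u ∈ monExponents (I j ^ c j)) :
    u ∈ monExponents ((∑ j, I j) ^ ∑ j, c j) := by
  refine isUpperSet_monExponents _ (sum_restrictTo_le hsupp u) ?_
  rw [mem_monExponents, monomial_sum_one, ← Finset.prod_pow_eq_pow_sum]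
  exact Ideal.prod_mem_prod fun j _ => Ideal.pow_right_mono (ideal_le_sum I j) _
    ((hmon j).restrictTo_suppIdeal_mem_pow_iff.2 (hu j))

include hpr

theorem mem_sum_pow_iff_le_sum_monOrder :
    u ∈ monExponents ((∑ j, I j) ^ k) ↔ k ≤ ∑ j, monOrder (I j) u := by
  constructor
  · intro hu
    obtain ⟨c, rfl, hc⟩ := exists_forall_mem_pow_of_mem_sum_pow hmon hu
    exact Finset.sum_le_sum fun j _ => ((hmon j).le_monOrder_iff (hpr j)).2 (hc j)
  · exact fun h => monExponents_mono (Ideal.pow_le_pow_right h)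
      (mem_sum_pow_of_forall_mem_pow hmon hsupp
        fun j => ((hmon j).le_monOrder_iff (hpr j)).1 le_rfl)

theorem monOrder_sum (u : σ →₀ ℕ) : monOrder (∑ j, I j) u = ∑ j, monOrder (I j) u :=
  eq_of_forall_le_iff fun _ =>
    ((isMonomialIdeal_sum hmon).le_monOrder_iff (sum_ne_top hpr hmon)).trans
      (mem_sum_pow_iff_le_sum_monOrder hpr hmon hsupp)

include hnz

variable [Nonempty ι]

theorem isPrimeWitness_sum_pow_iff :
    IsPrimeWitness ((∑ j, I j) ^ (k + 1)) u ↔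
      ∃ c : ι → ℕ, ∑ j, c j = k ∧ ∀ j, IsPrimeWitness (I j ^ (c j + 1)) u := by
  have hjump : IsPrimeJump (monOrder (∑ j, I j)) u ↔ ∀ j, IsPrimeJump (monOrder (I j)) u := by
    rw [funext (monOrder_sum hpr hmon hsupp)]
    exact isPrimeJump_sum_iff hsupp (fun j => (hmon j).monOrder_restrictTo)
      fun j => (hmon j).monotone_monOrder (hpr j)
  have hsum : ∑ j, I j ≠ ⊥ :=
    ne_bot_of_le_ne_bot (hnz (Classical.arbitrary ι)) (ideal_le_sum I _)
  rw [(isMonomialIdeal_sum hmon).isPrimeWitness_pow_succ_iff hsum (sum_ne_top hpr hmon),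
    hjump, monOrder_sum hpr hmon hsupp]
  simp only [fun j c => (hmon j).isPrimeWitness_pow_succ_iff (k := c) (u := u) (hnz j) (hpr j)]
  constructor
  · exact fun ⟨hk, hj⟩ => ⟨_, hk, fun j => ⟨rfl, hj j⟩⟩
  · rintro ⟨c, rfl, hc⟩
    exact ⟨Finset.sum_congr rfl fun j _ => (hc j).1, fun j => (hc j).2⟩

variable [Finite σ]

theorem vnumber_sum_pow_succ_le (c : ι → ℕ) :
    vnumber ((∑ j, I j) ^ (∑ j, c j + 1)) ≤ ∑ j, vnumber (I j ^ (c j + 1)) := by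
  choose w hw hdeg using fun j =>
    (((hmon j).pow (c j + 1)).isLeast_vnumber (pow_succ_ne_top (hpr j) _)).1
  set u := ∑ j, restrictTo (suppIdeal (I j)) (w j)
  have hwit : IsPrimeWitness ((∑ j, I j) ^ (∑ j, c j + 1)) u :=
    (isPrimeWitness_sum_pow_iff hnz hpr hmon hsupp).2 ⟨c, rfl, fun j =>
      ((hmon j).isPrimeWitness_pow_congr (restrictTo_sum_restrictTo hsupp w j)).2 (hw j)⟩
  calc vnumber ((∑ j, I j) ^ (∑ j, c j + 1))
    _ ≤ u.degree := (((isMonomialIdeal_sum hmon).pow _).isLeast_vnumber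
          (pow_succ_ne_top (sum_ne_top hpr hmon) _)).2 ⟨u, hwit, rfl⟩
    _ = ∑ j, (restrictTo (suppIdeal (I j)) (w j)).degree := map_sum Finsupp.degree _ _
    _ ≤ ∑ j, (w j).degree := Finset.sum_le_sum fun j _ => Finsupp.degree_mono (restrictTo_le _ _)
    _ = ∑ j, vnumber (I j ^ (c j + 1)) := Finset.sum_congr rfl fun j _ => hdeg j

theorem exists_sum_vnumber_le_vnumber_sum_pow_succ (k : ℕ) :
    ∃ c : ι → ℕ, ∑ j, c j = k ∧
      ∑ j, vnumber (I j ^ (c j + 1)) ≤ vnumber ((∑ j, I j) ^ (k + 1)) := by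
  obtain ⟨u, hu, hdeg⟩ := (((isMonomialIdeal_sum hmon).pow (k + 1)).isLeast_vnumber
    (pow_succ_ne_top (sum_ne_top hpr hmon) k)).1
  obtain ⟨c, hc, hw⟩ := (isPrimeWitness_sum_pow_iff hnz hpr hmon hsupp).1 hu
  refine ⟨c, hc, ?_⟩
  calc ∑ j, vnumber (I j ^ (c j + 1))
    _ ≤ ∑ j, (restrictTo (suppIdeal (I j)) u).degree := Finset.sum_le_sum fun j _ =>
        (((hmon j).pow (c j + 1)).isLeast_vnumber (pow_succ_ne_top (hpr j) _)).2
          ⟨_, ((hmon j).isPrimeWitness_pow_congr (restrictTo_restrictTo _ u)).2 (hw j), rfl⟩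
    _ = (∑ j, restrictTo (suppIdeal (I j)) u).degree := (map_sum Finsupp.degree _ _).symm
    _ ≤ u.degree := Finsupp.degree_mono (sum_restrictTo_le hsupp u)
    _ = vnumber ((∑ j, I j) ^ (k + 1)) := hdeg

theorem isLeast_vnumber_sum_pow_succ (k : ℕ) :
    IsLeast ((fun c : ι → ℕ => ∑ j, vnumber (I j ^ (c j + 1))) '' {c | ∑ j, c j = k})
      (vnumber ((∑ j, I j) ^ (k + 1))) := by
  have hle := vnumber_sum_pow_succ_le hnz hpr hmon hsupp
  obtain ⟨c, rfl, hc⟩ := exists_sum_vnumber_le_vnumber_sum_pow_succ hnz hpr hmon hsupp k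
  refine ⟨⟨c, rfl, hc.antisymm (hle c)⟩, ?_⟩
  rintro _ ⟨c', hc', rfl⟩
  exact hc' ▸ hle c'

end Sums

theorem stmt11_general {σ ι K : Type} [Field K] [Finite σ] [Fintype ι]
    (I : ι → Ideal (MvPolynomial σ K)) (hnz : ∀ j, I j ≠ ⊥) (hpr : ∀ j, I j ≠ ⊤)
    (hmon : ∀ j, IsMonomialIdeal (I j))
    (hsupp : Pairwise fun i j => Disjoint (suppIdeal (I i)) (suppIdeal (I j)))
    (hv : ∀ j, vnumber (I j) = alphaDeg (I j) - 1) {j₀ : ι}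
    (hj₀ : ∀ j, alphaDeg (I j₀) ≤ alphaDeg (I j)) {k : ℕ} (hk : 1 ≤ k)
    (hvk : vnumber (I j₀ ^ k) = alphaDeg (I j₀) * k - 1) :
    (vnumber ((∑ j, I j) ^ k) : ℤ) = (alphaDeg (I j₀) : ℤ) * k +
      ((∑ j, (alphaDeg (I j) : ℤ)) - (alphaDeg (I j₀) : ℤ) - Fintype.card ι) := by
  classical
  obtain ⟨m, rfl⟩ := Nat.exists_eq_add_of_le' hk
  have : Nonempty ι := ⟨j₀⟩
  have hsum : ∀ c : ι → ℕ, ∑ j, c j = m →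
      ∑ j, ((alphaDeg (I j) : ℤ) - 1 + alphaDeg (I j₀) * c j) = alphaDeg (I j₀) * ↑(m + 1) +
        ((∑ j, (alphaDeg (I j) : ℤ)) - alphaDeg (I j₀) - Fintype.card ι) := by
    rintro c rfl
    simp only [Finset.sum_add_distrib, Finset.sum_sub_distrib, ← Finset.mul_sum,
      Finset.sum_const, Finset.card_univ, nsmul_one, Nat.cast_add, Nat.cast_sum, Nat.cast_one]
    ring
  have hlower : ∀ j (c : ℕ), (alphaDeg (I j) : ℤ) - 1 + alphaDeg (I j₀) * c ≤
      vnumber (I j ^ (c + 1)) := by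
    intro j c
    have h := (hmon j).alphaDeg_mul_le_vnumber_pow_add_one (hnz j) (pow_succ_ne_top (hpr j) c)
    have hc := Nat.mul_le_mul_right c (hj₀ j)
    zify at h hc
    linarith
  have hsingle : ∀ j, (vnumber (I j ^ ((Pi.single j₀ m : ι → ℕ) j + 1)) : ℤ) =
      alphaDeg (I j) - 1 + alphaDeg (I j₀) * (Pi.single j₀ m : ι → ℕ) j := by
    intro j
    have hpos := (hmon j).alphaDeg_pos (hnz j) (hpr j)
    obtain rfl | hj := eq_or_ne j j₀
    · rw [Pi.single_eq_same, hvk, Nat.cast_sub (Nat.mul_pos hpos m.succ_pos)]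
      push_cast
      ring
    · simp [Pi.single_eq_of_ne hj, hv, Nat.cast_sub (Nat.one_le_of_lt hpos)]
  obtain ⟨⟨c, hc, hcv⟩, hmin⟩ := isLeast_vnumber_sum_pow_succ hnz hpr hmon hsupp m
  have hm : ∑ j, (Pi.single j₀ m : ι → ℕ) j = m := by simp
  apply le_antisymm
  · rw [← hsum _ hm, ← Finset.sum_congr rfl fun j _ => hsingle j, ← Nat.cast_sum]
    exact Int.ofNat_le.2 (hmin ⟨_, hm, rfl⟩)
  · rw [← hsum c hc, ← hcv, Nat.cast_sum]
    exact Finset.sum_le_sum fun j _ => hlower j (c j)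

/-- Theorem 5.2, v-stability index one: let `I_1,…,I_t` be nonzero proper
monomial ideals with pairwise disjoint supports such that `v(I_j^k) = α(I_j)·k − 1` for all
`k ≥ 1`.  Then for every `k ≥ 1`,
`v((I_1+⋯+I_t)^k) = (min_j α(I_j))·k + (∑_j α(I_j) − min_j α(I_j) − t)`. -/
theorem stmt11 {K : Type} [Field K] {n t : ℕ} (ht : 0 < t)
    (I : Fin t → Ideal (MvPolynomial (Fin n) K))
    (hnz : ∀ j, I j ≠ ⊥) (hpr : ∀ j, I j ≠ ⊤) (hmon : ∀ j, IsMonomialIdeal (I j))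
    (hsupp : Pairwise fun i j => Disjoint (suppIdeal (I i)) (suppIdeal (I j)))
    (hv : ∀ j, ∀ k : ℕ, 1 ≤ k → vnumber (I j ^ k) = alphaDeg (I j) * k - 1) :
    ∀ k : ℕ, 1 ≤ k →
      (vnumber ((∑ j, I j) ^ k) : ℤ) =
        ((Finset.univ.inf' ⟨⟨0, ht⟩, Finset.mem_univ _⟩ fun j => alphaDeg (I j) : ℕ) : ℤ) * k +
        ((∑ j, (alphaDeg (I j) : ℤ)) -
          ((Finset.univ.inf' ⟨⟨0, ht⟩, Finset.mem_univ _⟩ fun j => alphaDeg (I j) : ℕ) : ℤ)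
          - t) := by
  intro k hk
  obtain ⟨j₀, -, hj₀⟩ := Finset.exists_mem_eq_inf' ⟨⟨0, ht⟩, Finset.mem_univ _⟩
    fun j => alphaDeg (I j)
  have hmin : ∀ j, alphaDeg (I j₀) ≤ alphaDeg (I j) :=
    fun j => hj₀ ▸ Finset.inf'_le _ (Finset.mem_univ j)
  rw [hj₀]
  simpa using stmt11_general I hnz hpr hmon hsupp (fun j => by simpa using hv j 1 le_rfl) hmin hk
    (hv j₀ k hk)
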